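/- arXiv:2201.03522 — 6 statements merged into one kernel-verified Lean document; each statement's English description precedes it below -/
import Mathlib

section
/- The pure strategy pair (p,q) = (0,0), in which both players play their second action, is a Nash equilibrium of Bandit Game 2 with value R2(0,0) = 3/4; moreover it is the unique Nash equilibrium: every Nash equilibrium (p,q) ∈ [0,1]² of Bandit Game 2 satisfies p = 0 and q = 0. -/
/-- Expected payoff in a 2×2 zero-sum bandit game where each player's mixed
strategy is identified with the probability of playing its first action. -/
noncomputable def banditPayoff (r : Fin 2 → Fin 2 → ℝ) (p q : ℝ) : ℝ :=
  p * q * r 0 0 + p * (1 - q) * r 0 1 + (1 - p) * q * r 1 0 + (1 - p) * (1 - q) * r 1 1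

/-- `(p, q) ∈ [0,1]²` is a Nash equilibrium of the bandit game `r`. -/
noncomputable def IsBanditNash (r : Fin 2 → Fin 2 → ℝ) (p q : ℝ) : Prop :=
  p ∈ Set.Icc (0 : ℝ) 1 ∧ q ∈ Set.Icc (0 : ℝ) 1 ∧
  (∀ p' ∈ Set.Icc (0 : ℝ) 1, banditPayoff r p' q ≤ banditPayoff r p q) ∧
  (∀ q' ∈ Set.Icc (0 : ℝ) 1, banditPayoff r p q ≤ banditPayoff r p q')

/-- Bandit Game 2. -/
noncomputable def banditGame2 : Fin 2 → Fin 2 → ℝ :=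
  ![![1/4, 1/2], ![1, 3/4]]

/-!
Iterated strict dominance: the payoff is affine in each player's strategy, and the second row
strictly dominates the first, so the max player must put all weight on the second row. Against
that row the second column is strictly cheaper for the min player.
-/

section

variable {r : Fin 2 → Fin 2 → ℝ} {p q : ℝ}

theorem banditPayoff_sub_banditPayoff_left (r : Fin 2 → Fin 2 → ℝ) (p p' q : ℝ) :
    banditPayoff r p q - banditPayoff r p' q =
      (p - p') * (q * (r 0 0 - r 1 0) + (1 - q) * (r 0 1 - r 1 1)) := by
  simp only [banditPayoff]
  ring

theorem banditPayoff_zero_left (r : Fin 2 → Fin 2 → ℝ) (q : ℝ) :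
    banditPayoff r 0 q = r 1 1 + q * (r 1 0 - r 1 1) := by
  simp only [banditPayoff]
  ring

theorem banditPayoff_zero_zero (r : Fin 2 → Fin 2 → ℝ) : banditPayoff r 0 0 = r 1 1 := by
  rw [banditPayoff_zero_left, zero_mul, add_zero]

theorem strictAnti_banditPayoff_left (hrow : ∀ j, r 0 j < r 1 j) (hq : q ∈ Set.Icc (0 : ℝ) 1) :
    StrictAnti fun p => banditPayoff r p q := by
  intro p p' hpp'
  have slope_neg : q * (r 0 0 - r 1 0) + (1 - q) * (r 0 1 - r 1 1) < 0 :=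
    convex_Iio (0 : ℝ) (sub_neg.2 (hrow 0)) (sub_neg.2 (hrow 1)) hq.1 (sub_nonneg.2 hq.2)
      (add_sub_cancel q 1)
  rw [← sub_neg, banditPayoff_sub_banditPayoff_left]
  exact mul_neg_of_pos_of_neg (sub_pos.2 hpp') slope_neg

theorem strictMono_banditPayoff_zero (hcol : r 1 1 < r 1 0) : StrictMono (banditPayoff r 0) := by
  intro q q' hqq'
  simp only [banditPayoff_zero_left]
  have := sub_pos.2 hcol
  gcongr

theorem isBanditNash_zero_zero (hrow : ∀ j, r 0 j < r 1 j) (hcol : r 1 1 < r 1 0) :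
    IsBanditNash r 0 0 :=
  have zero_mem : (0 : ℝ) ∈ Set.Icc (0 : ℝ) 1 := Set.left_mem_Icc.2 zero_le_one
  ⟨zero_mem, zero_mem,
    fun _ hp' => (strictAnti_banditPayoff_left hrow zero_mem).antitone hp'.1,
    fun _ hq' => (strictMono_banditPayoff_zero hcol).monotone hq'.1⟩

theorem IsBanditNash.left_eq_zero (h : IsBanditNash r p q) (hrow : ∀ j, r 0 j < r 1 j) :
    p = 0 := by
  obtain ⟨hp, hq, hmax, -⟩ := h
  have payoff_le : banditPayoff r 0 q ≤ banditPayoff r p q :=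
    hmax 0 (Set.left_mem_Icc.2 zero_le_one)
  exact le_antisymm ((strictAnti_banditPayoff_left hrow hq).le_iff_ge.1 payoff_le) hp.1

theorem IsBanditNash.right_eq_zero (h : IsBanditNash r 0 q) (hcol : r 1 1 < r 1 0) :
    q = 0 := by
  obtain ⟨-, hq, -, hmin⟩ := h
  have payoff_le : banditPayoff r 0 q ≤ banditPayoff r 0 0 :=
    hmin 0 (Set.left_mem_Icc.2 zero_le_one)
  exact le_antisymm ((strictMono_banditPayoff_zero hcol).le_iff_le.1 payoff_le) hq.1

end

theorem banditGame2_row_zero_lt_row_one (j : Fin 2) : banditGame2 0 j < banditGame2 1 j := by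
  fin_cases j <;> norm_num [banditGame2]

theorem banditGame2_one_one_lt_one_zero : banditGame2 1 1 < banditGame2 1 0 := by
  norm_num [banditGame2]

theorem banditGame2_nash_unique :
    IsBanditNash banditGame2 0 0 ∧ banditPayoff banditGame2 0 0 = 3/4 ∧
    ∀ p q : ℝ, IsBanditNash banditGame2 p q → p = 0 ∧ q = 0 := by
  refine ⟨isBanditNash_zero_zero banditGame2_row_zero_lt_row_one banditGame2_one_one_lt_one_zero,
    banditPayoff_zero_zero banditGame2, fun p q h => ?_⟩
  obtain rfl : p = 0 := h.left_eq_zero banditGame2_row_zero_lt_row_one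
  exact ⟨rfl, h.right_eq_zero banditGame2_one_one_lt_one_zero⟩
end

section
/- For all p, q ∈ [0,1], the duality gap of the strategy pair (p,q) in Bandit Game 1 satisfies Gap1(p,q) ≥ (2 − p − q)/4. -/
/-- Duality gap of the strategy pair `(p, q)` in the bandit game `r`. -/
noncomputable def banditGap (r : Fin 2 → Fin 2 → ℝ) (p q : ℝ) : ℝ :=
  sSup ((fun p' => banditPayoff r p' q) '' Set.Icc (0 : ℝ) 1) -
    sInf ((fun q' => banditPayoff r p q') '' Set.Icc (0 : ℝ) 1)

/-- Bandit Game 1. -/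
noncomputable def banditGame1 : Fin 2 → Fin 2 → ℝ :=
  ![![1/4, 1/2], ![0, 3/4]]

section

variable (r : Fin 2 → Fin 2 → ℝ)

theorem continuous_banditPayoff {X : Type*} [TopologicalSpace X]
    {f g : X → ℝ} (hf : Continuous f) (hg : Continuous g) :
    Continuous fun x => banditPayoff r (f x) (g x) := by
  unfold banditPayoff
  fun_prop

theorem banditPayoff_le_sSup_image (q : ℝ) {p' : ℝ}
    (hp' : p' ∈ Set.Icc (0 : ℝ) 1) :
    banditPayoff r p' q ≤ sSup ((fun p => banditPayoff r p q) '' Set.Icc (0 : ℝ) 1) :=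
  le_csSup (isCompact_Icc.image (continuous_banditPayoff r continuous_id continuous_const)).bddAbove
    (Set.mem_image_of_mem _ hp')

theorem sInf_image_le_banditPayoff (p : ℝ) {q' : ℝ}
    (hq' : q' ∈ Set.Icc (0 : ℝ) 1) :
    sInf ((fun q => banditPayoff r p q) '' Set.Icc (0 : ℝ) 1) ≤ banditPayoff r p q' :=
  csInf_le (isCompact_Icc.image (continuous_banditPayoff r continuous_const continuous_id)).bddBelow
    (Set.mem_image_of_mem _ hq')

theorem banditPayoff_sub_banditPayoff_le_banditGap (p q : ℝ) {p' q' : ℝ}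
    (hp' : p' ∈ Set.Icc (0 : ℝ) 1) (hq' : q' ∈ Set.Icc (0 : ℝ) 1) :
    banditPayoff r p' q - banditPayoff r p q' ≤ banditGap r p q :=
  sub_le_sub (banditPayoff_le_sSup_image r q hp') (sInf_image_le_banditPayoff r p hq')

theorem banditPayoff_one_left (q : ℝ) :
    banditPayoff r 1 q = q * r 0 0 + (1 - q) * r 0 1 := by
  unfold banditPayoff
  ring

theorem banditPayoff_one_right (p : ℝ) :
    banditPayoff r p 1 = p * r 0 0 + (1 - p) * r 1 0 := by
  unfold banditPayoff
  ring

/-- The left-hand side compares the deviations of both players to their pure first action. -/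
theorem banditGame1_gap_lower_bound_general (p q : ℝ) :
    (q * r 0 0 + (1 - q) * r 0 1) - (p * r 0 0 + (1 - p) * r 1 0) ≤ banditGap r p q := by
  have one_mem : (1 : ℝ) ∈ Set.Icc (0 : ℝ) 1 := Set.right_mem_Icc.2 zero_le_one
  rw [← banditPayoff_one_left, ← banditPayoff_one_right]
  exact banditPayoff_sub_banditPayoff_le_banditGap r p q one_mem one_mem

end

theorem banditGame1_gap_lower_bound (p q : ℝ)
    (hp : p ∈ Set.Icc (0 : ℝ) 1) (hq : q ∈ Set.Icc (0 : ℝ) 1) :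
    (2 - p - q) / 4 ≤ banditGap banditGame1 p q := by
  refine le_of_eq_of_le ?_ (banditGame1_gap_lower_bound_general banditGame1 p q)
  simp only [banditGame1, Matrix.cons_val]
  ring
end

section
/- For every strategy pair (p,q) ∈ [0,1]², the duality gaps in the two bandit games satisfy Gap1(p,q) + Gap2(p,q) ≥ 1/2; in particular max(Gap1(p,q), Gap2(p,q)) ≥ 1/4, so no single strategy pair can be a 1/4-approximate Nash equilibrium of both Bandit Game 1 and Bandit Game 2 simultaneously. -/
/-!
Deviating to a pure action bounds each gap from below. In Game 1 let both players deviate to their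
first action, in Game 2 to their second. Against every column the two row deviations earn
`1/4 + 1 = 1/2 + 3/4 = 5/4` in total, and against every row the two column deviations concede
`1/4 + 1/2 = 0 + 3/4 = 3/4` in total, so the gaps add up to at least `5/4 - 3/4`.
-/

/-- The probability of playing the first action under the pure strategy `i`: this identifies the
pure strategies with the endpoints of `[0, 1]`, action `0` being the endpoint `1`. -/
def pureStrategy (i : Fin 2) : ℝ :=
  ![1, 0] i

theorem pureStrategy_mem_Icc (i : Fin 2) : pureStrategy i ∈ Set.Icc (0 : ℝ) 1 := by
  fin_cases i <;> simp [pureStrategy]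

section SingleGame

variable (r : Fin 2 → Fin 2 → ℝ)

theorem banditPayoff_pureStrategy_left (i : Fin 2) (q : ℝ) :
    banditPayoff r (pureStrategy i) q = q * r i 0 + (1 - q) * r i 1 := by
  fin_cases i <;> simp [banditPayoff, pureStrategy]

theorem banditPayoff_pureStrategy_right (p : ℝ) (j : Fin 2) :
    banditPayoff r p (pureStrategy j) = p * r 0 j + (1 - p) * r 1 j := by
  fin_cases j <;> simp [banditPayoff, pureStrategy]

theorem bddAbove_banditPayoff_image_left (q : ℝ) :
    BddAbove ((fun p' => banditPayoff r p' q) '' Set.Icc (0 : ℝ) 1) :=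
  isCompact_Icc.bddAbove_image (by unfold banditPayoff; fun_prop)

theorem bddBelow_banditPayoff_image_right (p : ℝ) :
    BddBelow ((fun q' => banditPayoff r p q') '' Set.Icc (0 : ℝ) 1) :=
  isCompact_Icc.bddBelow_image (by unfold banditPayoff; fun_prop)

end SingleGame

section TwoGames

variable {r s : Fin 2 → Fin 2 → ℝ}

theorem le_banditPayoff_pureStrategy_add {i k : Fin 2} {a q : ℝ} (hq : q ∈ Set.Icc (0 : ℝ) 1)
    (ha : ∀ c, a ≤ r i c + s k c) :
    a ≤ banditPayoff r (pureStrategy i) q + banditPayoff s (pureStrategy k) q := by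
  have hq₀ : 0 ≤ q := hq.1
  have hq₁ : 0 ≤ 1 - q := sub_nonneg.2 hq.2
  calc
    a = q * a + (1 - q) * a := by ring
    _ ≤ q * (r i 0 + s k 0) + (1 - q) * (r i 1 + s k 1) := by gcongr <;> apply ha
    _ = banditPayoff r (pureStrategy i) q + banditPayoff s (pureStrategy k) q := by
      rw [banditPayoff_pureStrategy_left, banditPayoff_pureStrategy_left]
      ring

theorem banditPayoff_pureStrategy_add_le {j l : Fin 2} {b p : ℝ} (hp : p ∈ Set.Icc (0 : ℝ) 1)
    (hb : ∀ c, r c j + s c l ≤ b) :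
    banditPayoff r p (pureStrategy j) + banditPayoff s p (pureStrategy l) ≤ b := by
  have hp₀ : 0 ≤ p := hp.1
  have hp₁ : 0 ≤ 1 - p := sub_nonneg.2 hp.2
  calc
    banditPayoff r p (pureStrategy j) + banditPayoff s p (pureStrategy l)
      = p * (r 0 j + s 0 l) + (1 - p) * (r 1 j + s 1 l) := by
      rw [banditPayoff_pureStrategy_right, banditPayoff_pureStrategy_right]
      ring
    _ ≤ p * b + (1 - p) * b := by gcongr <;> apply hb
    _ = b := by ring

theorem sub_le_banditGap_add_banditGap {i j k l : Fin 2} {a b p q : ℝ}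
    (hp : p ∈ Set.Icc (0 : ℝ) 1) (hq : q ∈ Set.Icc (0 : ℝ) 1)
    (ha : ∀ c, a ≤ r i c + s k c) (hb : ∀ c, r c j + s c l ≤ b) :
    a - b ≤ banditGap r p q + banditGap s p q := by
  have gap_r := banditPayoff_sub_banditPayoff_le_banditGap r p q
    (pureStrategy_mem_Icc i) (pureStrategy_mem_Icc j)
  have gap_s := banditPayoff_sub_banditPayoff_le_banditGap s p q
    (pureStrategy_mem_Icc k) (pureStrategy_mem_Icc l)
  have earned := le_banditPayoff_pureStrategy_add hq ha
  have conceded := banditPayoff_pureStrategy_add_le hp hb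
  linarith

end TwoGames

theorem banditGame1_row_zero_add_banditGame2_row_one (c : Fin 2) :
    banditGame1 0 c + banditGame2 1 c = 5 / 4 := by
  fin_cases c <;> norm_num [banditGame1, banditGame2]

theorem banditGame1_col_zero_add_banditGame2_col_one (c : Fin 2) :
    banditGame1 c 0 + banditGame2 c 1 = 3 / 4 := by
  fin_cases c <;> norm_num [banditGame1, banditGame2]

theorem banditGames_gap_sum_lower_bound (p q : ℝ)
    (hp : p ∈ Set.Icc (0 : ℝ) 1) (hq : q ∈ Set.Icc (0 : ℝ) 1) :
    1/2 ≤ banditGap banditGame1 p q + banditGap banditGame2 p q ∧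
    1/4 ≤ max (banditGap banditGame1 p q) (banditGap banditGame2 p q) := by
  have gap_sum : 5 / 4 - 3 / 4 ≤ banditGap banditGame1 p q + banditGap banditGame2 p q :=
    sub_le_banditGap_add_banditGap hp hq
      (fun c => (banditGame1_row_zero_add_banditGame2_row_one c).ge)
      (fun c => (banditGame1_col_zero_add_banditGame2_col_one c).le)
  have gap₁_le_max := le_max_left (banditGap banditGame1 p q) (banditGap banditGame2 p q)
  have gap₂_le_max := le_max_right (banditGap banditGame1 p q) (banditGap banditGame2 p q)
  constructor <;> linarith
end

section
/- For every Borel probability measure λ on [0,1] × [0,1] (the output distribution of any, possibly randomized, algorithm), max( ∫ Gap1(p,q) dλ(p,q), ∫ Gap2(p,q) dλ(p,q) ) ≥ 1/4; that is, in at least one of the two bandit games the expected duality gap of the output is at least 1/4. -/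
open MeasureTheory

theorem div_two_le_max_integral_of_ae_le_add {Ω : Type*} [MeasurableSpace Ω] {μ : Measure Ω}
    [IsProbabilityMeasure μ] {f g : Ω → ℝ} {c : ℝ} (hf : Integrable f μ) (hg : Integrable g μ)
    (hc : ∀ᵐ ω ∂μ, c ≤ f ω + g ω) :
    c / 2 ≤ max (∫ ω, f ω ∂μ) (∫ ω, g ω ∂μ) := by
  have hsum : c ≤ (∫ ω, f ω ∂μ) + ∫ ω, g ω ∂μ :=
    calc
      c = ∫ _, c ∂μ := by simp
      _ ≤ ∫ ω, f ω + g ω ∂μ := integral_mono_ae (integrable_const c) (hf.add hg) hc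
      _ = (∫ ω, f ω ∂μ) + ∫ ω, g ω ∂μ := integral_add hf hg
  linarith [le_max_left (∫ ω, f ω ∂μ) (∫ ω, g ω ∂μ), le_max_right (∫ ω, f ω ∂μ) (∫ ω, g ω ∂μ)]

theorem continuous_uncurry_banditPayoff (r : Fin 2 → Fin 2 → ℝ) :
    Continuous (Function.uncurry (banditPayoff r)) := by
  simp only [Function.uncurry_def, banditPayoff]
  fun_prop

theorem continuous_uncurry_banditGap (r : Fin 2 → Fin 2 → ℝ) :
    Continuous (Function.uncurry (banditGap r)) := by
  have hpayoff := continuous_uncurry_banditPayoff r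
  have hbestRow : Continuous fun q =>
      sSup ((fun p' => banditPayoff r p' q) '' Set.Icc (0 : ℝ) 1) :=
    isCompact_Icc.continuous_sSup (hpayoff.comp continuous_swap)
  have hbestCol : Continuous fun p =>
      sInf ((fun q' => banditPayoff r p q') '' Set.Icc (0 : ℝ) 1) :=
    isCompact_Icc.continuous_sInf hpayoff
  exact (hbestRow.comp continuous_snd).sub (hbestCol.comp continuous_fst)

theorem integrable_banditGap (r : Fin 2 → Fin 2 → ℝ)
    (μ : Measure (Set.Icc (0 : ℝ) 1 × Set.Icc (0 : ℝ) 1)) [IsFiniteMeasure μ] :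
    Integrable (fun x => banditGap r (x.1 : ℝ) (x.2 : ℝ)) μ := by
  have hcont : Continuous fun x : Set.Icc (0 : ℝ) 1 × Set.Icc (0 : ℝ) 1 =>
      banditGap r (x.1 : ℝ) (x.2 : ℝ) :=
    (continuous_uncurry_banditGap r).comp
      (continuous_subtype_val.prodMap continuous_subtype_val)
  exact hcont.integrable_of_hasCompactSupport (HasCompactSupport.of_compactSpace _)

theorem banditPayoff_sub_le_banditGap (r : Fin 2 → Fin 2 → ℝ) (p q : ℝ) {p' q' : ℝ}
    (hp' : p' ∈ Set.Icc (0 : ℝ) 1) (hq' : q' ∈ Set.Icc (0 : ℝ) 1) :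
    banditPayoff r p' q - banditPayoff r p q' ≤ banditGap r p q := by
  have hpayoff := continuous_uncurry_banditPayoff r
  have hbdd : BddAbove ((fun p' => banditPayoff r p' q) '' Set.Icc (0 : ℝ) 1) :=
    isCompact_Icc.bddAbove_image (hpayoff.comp (.prodMk_left q)).continuousOn
  have hbdd' : BddBelow ((fun q' => banditPayoff r p q') '' Set.Icc (0 : ℝ) 1) :=
    isCompact_Icc.bddBelow_image (hpayoff.comp (.prodMk_right p)).continuousOn
  exact sub_le_sub (le_csSup hbdd (Set.mem_image_of_mem _ hp'))
    (csInf_le hbdd' (Set.mem_image_of_mem _ hq'))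

-- Deviating to the first actions in Game 1 and to the second actions in Game 2 yields regrets
-- whose sum does not depend on `(p, q)`.
theorem one_half_le_banditGap_banditGame1_add_banditGap_banditGame2 (p q : ℝ) :
    1 / 2 ≤ banditGap banditGame1 p q + banditGap banditGame2 p q := by
  have hzero : (0 : ℝ) ∈ Set.Icc 0 1 := Set.left_mem_Icc.2 zero_le_one
  have hone : (1 : ℝ) ∈ Set.Icc 0 1 := Set.right_mem_Icc.2 zero_le_one
  calc
    1 / 2 = (banditPayoff banditGame1 1 q - banditPayoff banditGame1 p 1) +
        (banditPayoff banditGame2 0 q - banditPayoff banditGame2 p 0) := by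
      simp only [banditPayoff, banditGame1, banditGame2, Matrix.cons_val]
      ring
    _ ≤ banditGap banditGame1 p q + banditGap banditGame2 p q :=
      add_le_add (banditPayoff_sub_le_banditGap banditGame1 p q hone hone)
        (banditPayoff_sub_le_banditGap banditGame2 p q hzero hzero)

/-- For any probability distribution over output strategy pairs in `[0,1]²`, in at
least one of the two bandit games the expected duality gap is at least `1/4`. -/
theorem banditGames_expected_gap_lower_bound
    (lam : Measure (Set.Icc (0 : ℝ) 1 × Set.Icc (0 : ℝ) 1)) [IsProbabilityMeasure lam] :
    1/4 ≤ max (∫ x, banditGap banditGame1 (x.1 : ℝ) (x.2 : ℝ) ∂lam)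
              (∫ x, banditGap banditGame2 (x.1 : ℝ) (x.2 : ℝ) ∂lam) := by
  have hgap := div_two_le_max_integral_of_ae_le_add
    (integrable_banditGap banditGame1 lam) (integrable_banditGap banditGame2 lam)
    (ae_of_all lam fun x =>
      one_half_le_banditGap_banditGame1_add_banditGap_banditGame2 (x.1 : ℝ) (x.2 : ℝ))
  linarith
end

section
/- Let (Ω, ℱ, μ) be a probability space, H ≥ 0 a real constant, and V, V' : Ω → ℝ measurable functions with 0 ≤ V(ω) ≤ V'(ω) ≤ H for all ω. Then Var(V) ≤ Var(V') + 2H · ∫ (V' − V) dμ. -/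
open MeasureTheory ProbabilityTheory

section

variable {Ω : Type*} [MeasurableSpace Ω] {μ : Measure Ω} [IsProbabilityMeasure μ] {X Y : Ω → ℝ}

lemma variance_add_sq_integral_le_of_abs_le (hX : AEStronglyMeasurable X μ) (hY : MemLp Y 2 μ)
    (hXY : ∀ᵐ ω ∂μ, |X ω| ≤ |Y ω|) :
    Var[X; μ] + μ[X] ^ 2 ≤ Var[Y; μ] + μ[Y] ^ 2 := by
  have hX₂ : MemLp X 2 μ := hY.mono hX hXY
  calc Var[X; μ] + μ[X] ^ 2
      = μ[X ^ 2] := by rw [variance_eq_sub hX₂, sub_add_cancel]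
    _ ≤ μ[Y ^ 2] := by
        refine integral_mono_ae hX₂.integrable_sq hY.integrable_sq ?_
        filter_upwards [hXY] with ω h using sq_le_sq.mpr h
    _ = Var[Y; μ] + μ[Y] ^ 2 := by rw [variance_eq_sub hY, sub_add_cancel]

theorem variance_le_variance_add_two_mul_integral_sub_general {H : ℝ}
    (hX : AEStronglyMeasurable X μ) (hY : MemLp Y 2 μ) (hX_nonneg : 0 ≤ᵐ[μ] X) (hXY : X ≤ᵐ[μ] Y)
    (hYH : μ[Y] ≤ H) :
    Var[X; μ] ≤ Var[Y; μ] + 2 * H * ∫ ω, (Y ω - X ω) ∂μ := by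
  have h_abs : ∀ᵐ ω ∂μ, |X ω| ≤ |Y ω| := by
    filter_upwards [hX_nonneg, hXY] with ω h₀ h using abs_le_abs_of_nonneg h₀ h
  have hX_int : Integrable X μ := (hY.mono hX h_abs).integrable one_le_two
  have hY_int : Integrable Y μ := hY.integrable one_le_two
  have h_mean : μ[X] ≤ μ[Y] := integral_mono_ae hX_int hY_int hXY
  calc Var[X; μ]
      ≤ Var[Y; μ] + (μ[Y] + μ[X]) * (μ[Y] - μ[X]) := by
        linarith [variance_add_sq_integral_le_of_abs_le hX hY h_abs]
    _ ≤ Var[Y; μ] + 2 * H * (μ[Y] - μ[X]) := by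
        gcongr
        linarith
    _ = Var[Y; μ] + 2 * H * ∫ ω, (Y ω - X ω) ∂μ := by rw [integral_sub hY_int hX_int]

end

/-- Variance comparison for sandwiched bounded functions: if `0 ≤ V ≤ V' ≤ H`
pointwise, then `Var(V) ≤ Var(V') + 2H ∫ (V' − V) dμ`. -/
theorem variance_le_variance_add_two_mul_integral_sub
    {Ω : Type*} [MeasurableSpace Ω] (μ : Measure Ω) [IsProbabilityMeasure μ]
    (H : ℝ) (hH : 0 ≤ H) (V V' : Ω → ℝ) (hV : Measurable V) (hV' : Measurable V')
    (h0 : ∀ ω, 0 ≤ V ω) (hle : ∀ ω, V ω ≤ V' ω) (hub : ∀ ω, V' ω ≤ H) :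
    variance V μ ≤ variance V' μ + 2 * H * ∫ ω, (V' ω - V ω) ∂μ := by
  have hV'_memLp : MemLp V' 2 μ :=
    memLp_of_bounded (.of_forall fun ω ↦ ⟨(h0 ω).trans (hle ω), hub ω⟩) hV'.aestronglyMeasurable 2
  have hV'_mean : μ[V'] ≤ H := by
    simpa using integral_mono (hV'_memLp.integrable one_le_two) (integrable_const H) hub
  exact variance_le_variance_add_two_mul_integral_sub_general hV.aestronglyMeasurable hV'_memLp
    (.of_forall h0) (.of_forall hle) hV'_mean
end

section
/- Let S be a nonempty finite type, s1 : S an initial state, H a natural number, P : Fin H → S → PMF S stagewise transition kernels, and r : Fin H → S → ℝ rewards with 0 ≤ r h s ≤ 1 for all h, s. Define the value functions V : Fin (H+1) → S → ℝ by V H s = 0 and V h s = r h s + Σ_{s'} (P h s s') · V (h+1) s' for h < H, and the occupancy distributions d : Fin (H+1) → PMF S by d 0 = PMF.pure s1 and d (h+1) = (d h).bind (P h). Then the total expected one-step variance is at most H²: Σ_{h=0}^{H−1} Σ_{s} (d h s) · Var_{P h s}(V (h+1)) ≤ H², where Var_{P h s}(W) = Σ_{s'} (P h s s') · ( W s' −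 Σ_{s''} (P h s s'') · W s'' )². -/
open Finset

/-!
Suppose the values at stage `h` lie in `[lo h, hi h]`. The Bhatia–Davis potential
`Φ h s = (V h s - lo h) * (hi h - V h s)` satisfies, for any law `p` of the next state,
`Var_p (V (h+1)) + E_p (Φ (h+1)) = (m - lo (h+1)) * (hi (h+1) - m)` with `m = E_p (V (h+1))`,
because the squares cancel. Adding the reward widens both factors, so the right-hand side is at most
`Φ h s`. Averaging over the occupancy distributions and telescoping bounds the total variance by the
initial mean of `Φ 0`, hence by `((hi 0 - lo 0) / 2) ^ 2`.
-/

section Expectation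

variable {S : Type*} [Fintype S]

/-- The expectation of a real function under a probability mass function on a finite type, written
as a finite sum so that no measurable structure on `S` is involved. -/
noncomputable def pmfExpect (p : PMF S) (f : S → ℝ) : ℝ :=
  ∑ s, (p s).toReal * f s

/-- The variance of a real function under a probability mass function on a finite type: the expected
squared deviation from the mean. -/
noncomputable def pmfVariance (p : PMF S) (f : S → ℝ) : ℝ :=
  pmfExpect p fun s => (f s - pmfExpect p f) ^ 2

theorem sum_toReal_pmf (p : PMF S) : ∑ s, (p s).toReal = 1 := by
  rw [← ENNReal.toReal_sum fun s _ => p.apply_ne_top s, ← tsum_fintype (L := .unconditional S),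
    p.tsum_coe, ENNReal.toReal_one]

theorem pmfExpect_const (p : PMF S) (c : ℝ) : pmfExpect p (fun _ => c) = c := by
  rw [pmfExpect, ← sum_mul, sum_toReal_pmf, one_mul]

theorem pmfExpect_add (p : PMF S) (f g : S → ℝ) :
    pmfExpect p (fun s => f s + g s) = pmfExpect p f + pmfExpect p g := by
  simp only [pmfExpect, mul_add, sum_add_distrib]

theorem pmfExpect_const_mul (p : PMF S) (c : ℝ) (f : S → ℝ) :
    pmfExpect p (fun s => c * f s) = c * pmfExpect p f := by
  simp only [pmfExpect, mul_sum, mul_left_comm]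

theorem pmfExpect_mono (p : PMF S) {f g : S → ℝ} (hfg : ∀ s, f s ≤ g s) :
    pmfExpect p f ≤ pmfExpect p g :=
  sum_le_sum fun s _ => mul_le_mul_of_nonneg_left (hfg s) ENNReal.toReal_nonneg

theorem pmfExpect_le_of_forall_le (p : PMF S) {f : S → ℝ} {c : ℝ} (hf : ∀ s, f s ≤ c) :
    pmfExpect p f ≤ c :=
  (pmfExpect_mono p hf).trans_eq (pmfExpect_const p c)

theorem le_pmfExpect_of_forall_le (p : PMF S) {f : S → ℝ} {c : ℝ} (hf : ∀ s, c ≤ f s) :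
    c ≤ pmfExpect p f :=
  (pmfExpect_const p c).symm.trans_le (pmfExpect_mono p hf)

theorem pmfExpect_mem_Icc (p : PMF S) {f : S → ℝ} {lo hi : ℝ} (hf : ∀ s, f s ∈ Set.Icc lo hi) :
    pmfExpect p f ∈ Set.Icc lo hi :=
  ⟨le_pmfExpect_of_forall_le p fun s => (hf s).1, pmfExpect_le_of_forall_le p fun s => (hf s).2⟩

theorem toReal_pmf_bind_apply {T : Type*} (p : PMF S) (q : S → PMF T) (t : T) :
    (p.bind q t).toReal = pmfExpect p fun s => (q s t).toReal := by
  rw [PMF.bind_apply, tsum_fintype, ENNReal.toReal_sum fun s _ =>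
    ENNReal.mul_ne_top (p.apply_ne_top s) ((q s).apply_ne_top t)]
  simp only [ENNReal.toReal_mul, pmfExpect]

theorem pmfExpect_bind {T : Type*} [Fintype T] (p : PMF S) (q : S → PMF T) (f : T → ℝ) :
    pmfExpect (p.bind q) f = pmfExpect p fun s => pmfExpect (q s) f := by
  simp only [pmfExpect, toReal_pmf_bind_apply, sum_mul, mul_sum, mul_assoc]
  exact sum_comm

theorem pmfVariance_add_pmfExpect_sub_mul_sub (p : PMF S) (f : S → ℝ) (lo hi : ℝ) :
    pmfVariance p f + pmfExpect p (fun s => (f s - lo) * (hi - f s)) =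
      (pmfExpect p f - lo) * (hi - pmfExpect p f) := by
  set m := pmfExpect p f with hm
  have squares_cancel (s : S) :
      (f s - m) ^ 2 + (f s - lo) * (hi - f s) = (lo + hi - 2 * m) * f s + (m ^ 2 - lo * hi) := by
    ring
  rw [pmfVariance, ← pmfExpect_add]
  simp only [← hm, squares_cancel]
  rw [pmfExpect_add, pmfExpect_const_mul, pmfExpect_const, ← hm]
  ring

theorem pmfVariance_add_pmfExpect_le (p : PMF S) {f : S → ℝ} {lo hi lo' hi' c : ℝ}
    (hf : ∀ s, f s ∈ Set.Icc lo hi) (hlo : lo' ≤ c + lo) (hhi : c + hi ≤ hi') :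
    pmfVariance p f + pmfExpect p (fun s => (f s - lo) * (hi - f s)) ≤
      (c + pmfExpect p f - lo') * (hi' - (c + pmfExpect p f)) := by
  obtain ⟨lo_le_mean, mean_le_hi⟩ := pmfExpect_mem_Icc p hf
  rw [pmfVariance_add_pmfExpect_sub_mul_sub]
  exact mul_le_mul (by linarith) (by linarith) (by linarith) (by linarith)

end Expectation

theorem sub_mul_sub_le_sq_half_sub {K : Type*} [Field K] [LinearOrder K] [IsStrictOrderedRing K]
    (x a b : K) : (x - a) * (b - x) ≤ ((b - a) / 2) ^ 2 := by
  linarith [sq_nonneg (x - (a + b) / 2)]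

theorem sum_castSucc_sub_succ {M : Type*} [AddCommGroup M] {n : ℕ} (G : Fin (n + 1) → M) :
    ∑ i : Fin n, (G i.castSucc - G i.succ) = G 0 - G (Fin.last n) := by
  rw [sum_sub_distrib, sub_eq_sub_iff_add_eq_add, ← Fin.sum_univ_castSucc, Fin.sum_univ_succ]

section MarkovChain

variable {S : Type*} [Fintype S] {H : ℕ} {P : Fin H → S → PMF S} {r : Fin H → S → ℝ}
  {V : Fin (H + 1) → S → ℝ} {lo hi : Fin (H + 1) → ℝ} {d : Fin (H + 1) → PMF S}

theorem value_mem_Icc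
    (hV : ∀ h s, V h.castSucc s = r h s + pmfExpect (P h s) (V h.succ))
    (hVlast : ∀ s, V (Fin.last H) s ∈ Set.Icc (lo (Fin.last H)) (hi (Fin.last H)))
    (hlo : ∀ h s, lo h.castSucc ≤ r h s + lo h.succ)
    (hhi : ∀ h s, r h s + hi h.succ ≤ hi h.castSucc) (i : Fin (H + 1)) :
    ∀ s, V i s ∈ Set.Icc (lo i) (hi i) := by
  induction i using Fin.reverseInduction with
  | last => exact hVlast
  | cast h ih =>
    intro s
    obtain ⟨lo_le_mean, mean_le_hi⟩ := pmfExpect_mem_Icc (P h s) ih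
    rw [hV]
    exact ⟨by linarith [hlo h s], by linarith [hhi h s]⟩

theorem sum_pmfExpect_pmfVariance_le
    (hV : ∀ h s, V h.castSucc s = r h s + pmfExpect (P h s) (V h.succ))
    (hVlast : ∀ s, V (Fin.last H) s ∈ Set.Icc (lo (Fin.last H)) (hi (Fin.last H)))
    (hlo : ∀ h s, lo h.castSucc ≤ r h s + lo h.succ)
    (hhi : ∀ h s, r h s + hi h.succ ≤ hi h.castSucc)
    (hd : ∀ h, d h.succ = (d h.castSucc).bind (P h)) :
    ∑ h, pmfExpect (d h.castSucc) (fun s => pmfVariance (P h s) (V h.succ)) ≤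
      pmfExpect (d 0) fun s => (V 0 s - lo 0) * (hi 0 - V 0 s) := by
  let meanPotential (i : Fin (H + 1)) : ℝ :=
    pmfExpect (d i) fun s => (V i s - lo i) * (hi i - V i s)
  have variance_le_decrement (h : Fin H) :
      pmfExpect (d h.castSucc) (fun s => pmfVariance (P h s) (V h.succ)) ≤
        meanPotential h.castSucc - meanPotential h.succ := by
    simp only [meanPotential]
    rw [hd, pmfExpect_bind, le_sub_iff_add_le, ← pmfExpect_add]
    refine pmfExpect_mono _ fun s => ?_
    rw [hV]
    exact pmfVariance_add_pmfExpect_le (P h s) (value_mem_Icc hV hVlast hlo hhi h.succ)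
      (hlo h s) (hhi h s)
  have last_nonneg : 0 ≤ meanPotential (Fin.last H) :=
    le_pmfExpect_of_forall_le _ fun s =>
      mul_nonneg (sub_nonneg.2 (hVlast s).1) (sub_nonneg.2 (hVlast s).2)
  calc ∑ h, pmfExpect (d h.castSucc) (fun s => pmfVariance (P h s) (V h.succ))
      ≤ ∑ h : Fin H, (meanPotential h.castSucc - meanPotential h.succ) :=
        sum_le_sum fun h _ => variance_le_decrement h
    _ = meanPotential 0 - meanPotential (Fin.last H) := sum_castSucc_sub_succ meanPotential
    _ ≤ meanPotential 0 := sub_le_self _ last_nonneg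

theorem total_variance_le_general
    (hV : ∀ h s, V h.castSucc s = r h s + pmfExpect (P h s) (V h.succ))
    (hVlast : ∀ s, V (Fin.last H) s ∈ Set.Icc (lo (Fin.last H)) (hi (Fin.last H)))
    (hlo : ∀ h s, lo h.castSucc ≤ r h s + lo h.succ)
    (hhi : ∀ h s, r h s + hi h.succ ≤ hi h.castSucc)
    (hd : ∀ h, d h.succ = (d h.castSucc).bind (P h)) :
    ∑ h, pmfExpect (d h.castSucc) (fun s => pmfVariance (P h s) (V h.succ)) ≤
      ((hi 0 - lo 0) / 2) ^ 2 :=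
  (sum_pmfExpect_pmfVariance_le hV hVlast hlo hhi hd).trans <|
    pmfExpect_le_of_forall_le _ fun s => sub_mul_sub_le_sq_half_sub (V 0 s) (lo 0) (hi 0)

end MarkovChain

/-- Total variance lemma for finite-horizon Markov chains: the total expected
one-step variance of the value functions is at most `H²`. -/
theorem total_variance_le
    {S : Type*} [Fintype S] [Nonempty S] (s1 : S) (H : ℕ)
    (P : Fin H → S → PMF S) (r : Fin H → S → ℝ)
    (hr : ∀ h s, 0 ≤ r h s ∧ r h s ≤ 1)
    (V : Fin (H + 1) → S → ℝ)
    (hVlast : ∀ s, V (Fin.last H) s = 0)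
    (hV : ∀ (h : Fin H) (s : S),
      V h.castSucc s = r h s + ∑ s', (P h s s').toReal * V h.succ s')
    (d : Fin (H + 1) → PMF S)
    (hd0 : d 0 = PMF.pure s1)
    (hd : ∀ h : Fin H, d h.succ = (d h.castSucc).bind (P h)) :
    ∑ h : Fin H, ∑ s : S, (d h.castSucc s).toReal *
        (∑ s' : S, (P h s s').toReal *
          (V h.succ s' - ∑ s'' : S, (P h s s'').toReal * V h.succ s'') ^ 2)
      ≤ (H : ℝ) ^ 2 := by
  have quarter_bound := total_variance_le_general (lo := fun _ => 0) (hi := fun i => H - (i : ℕ))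
    hV (by simp [hVlast]) (by simpa using fun h s => (hr h s).1)
    (fun h s => by push_cast [Fin.val_succ, Fin.val_castSucc]; linarith [(hr h s).2]) hd
  refine quarter_bound.trans ?_
  simp only [Fin.val_zero, Nat.cast_zero, sub_zero]
  gcongr
  exact half_le_self H.cast_nonneg
end
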